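/- Let Ω ⊂ ℝⁿ be a bounded open set with smooth boundary, T > 0, and let F be continuous, uniformly elliptic with constants 0 < λ ≤ Λ, satisfying the structure condition with constant γ, the joint modulus bound |F(M,P,r,x,t) - F(M,P,r,y,s)| ≤ σ₁(|x-y|) + σ₂(|t-s|) with σ₂(h) ≤ C₀h, and sup_{(x,t)}|F(0,0,0,x,t)| ≤ K. Suppose that for every h ∈ (0,1] the Rothe approximations z_{n,h} exist, let U_h be the Rothe interpolants, and suppose h_k ↓ 0 is a sequence such that U_{h_k} converges uniformly on Ω̄ × [0,T] to a continuous function U. Then U is a viscosity solution of u_t + F(D²u, Du, u, x, t) = 0 in Ω × (0,T]: for every φ ∈ C^{2,1} and every ε > 0 such that φ_t + F(D²φ, Dφ, φ, x, t) ≥ ε > 0 pointwise, the function U - φ cannot attain a local maximum value of 0, and for every φ ∈ C^{2,1} and ε > 0 such that φ_t + F(D²φ, Dφ, φ, x, t) ≤ -ε < 0 pointwise, the function U - φ cannot attain a local minimum value of 0. -/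

import Mathlib

/-!
Suppose `U - φ` has a local maximum at `(x₀, t₀)`. Adding `‖x - x₀‖⁴ + (t - t₀)²` to `φ` makes the
maximum strict without changing the derivatives that enter the equation at `(x₀, t₀)`. By uniform
convergence, the maxima of `z_m(x) - φ(x, mh)` over the grid points of a small backward cylinder
with vertex `(x₀, t₀)` converge to `(x₀, t₀)` as `h → 0`. At such a maximum `(x, mh)` the discrete
equation can be tested with `φ(·, mh)`, while comparison with `(x, (m-1)h)` and the mean
value theorem give `(z_m(x) - z_{m-1}(x)) / h ≥ φ_t(x, τ)` for some `τ` between the two times. The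
resulting inequality `φ_t(x, τ) + F(D²φ, Dφ, z_m(x), x, mh) ≤ 0` passes to the limit because `F` is
continuous. Only times up to `t₀` are compared, so `t₀ = T` needs no separate treatment.
Supersolutions reduce to subsolutions by replacing `F`, `z`, `U` with `-F(-M, -P, -r, x, t)`, `-z`,
`-U`.
-/

open scoped RealInnerProductSpace
open MeasureTheory Filter Topology Asymptotics Metric Set

noncomputable section

abbrev Eucl (d : ℕ) := EuclideanSpace ℝ (Fin d)

open Classical in
noncomputable def eigs {d : ℕ} (M : Matrix (Fin d) (Fin d) ℝ) : Fin d → ℝ :=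
  if h : M.IsHermitian then h.eigenvalues else 0

noncomputable def specNorm {d : ℕ} (M : Matrix (Fin d) (Fin d) ℝ) : ℝ := ⨆ i, |eigs M i|
noncomputable def posPartNorm {d : ℕ} (M : Matrix (Fin d) (Fin d) ℝ) : ℝ := ⨆ i, max (eigs M i) 0
noncomputable def negPartNorm {d : ℕ} (M : Matrix (Fin d) (Fin d) ℝ) : ℝ := ⨆ i, max (-(eigs M i)) 0
noncomputable def posPartTrace {d : ℕ} (M : Matrix (Fin d) (Fin d) ℝ) : ℝ := ∑ i, max (eigs M i) 0
noncomputable def negPartTrace {d : ℕ} (M : Matrix (Fin d) (Fin d) ℝ) : ℝ := ∑ i, max (-(eigs M i)) 0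

noncomputable def pucciPlus {d : ℕ} (lam Lam : ℝ) (M : Matrix (Fin d) (Fin d) ℝ) : ℝ :=
  -lam * posPartTrace M + Lam * negPartTrace M

noncomputable def pucciMinus {d : ℕ} (lam Lam : ℝ) (M : Matrix (Fin d) (Fin d) ℝ) : ℝ :=
  -Lam * posPartTrace M + lam * negPartTrace M

noncomputable def gradAt {d : ℕ} (φ : Eucl d → ℝ) (x : Eucl d) : Eucl d :=
  (EuclideanSpace.equiv (Fin d) ℝ).symm (fun i => fderiv ℝ φ x (EuclideanSpace.single i 1))

noncomputable def hessAt {d : ℕ} (φ : Eucl d → ℝ) (x : Eucl d) : Matrix (Fin d) (Fin d) ℝ :=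
  Matrix.of fun i j =>
    fderiv ℝ (fun y => fderiv ℝ φ y (EuclideanSpace.single j 1)) x (EuclideanSpace.single i 1)

noncomputable def quadForm {d : ℕ} (M : Matrix (Fin d) (Fin d) ℝ) (v : Eucl d) : ℝ :=
  ∑ i, ∑ j, M i j * v i * v j

def ViscSubsol {d : ℕ} (Ω : Set (Eucl d))
    (G : Matrix (Fin d) (Fin d) ℝ → Eucl d → ℝ → Eucl d → ℝ)
    (g : Eucl d → ℝ) (u : Eucl d → ℝ) : Prop :=
  ∀ x₀ ∈ Ω, ∀ φ : Eucl d → ℝ, ContDiffAt ℝ 2 φ x₀ →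
    IsLocalMax (fun x => u x - φ x) x₀ →
    G (hessAt φ x₀) (gradAt φ x₀) (u x₀) x₀ ≤ g x₀

def ViscSupersol {d : ℕ} (Ω : Set (Eucl d))
    (G : Matrix (Fin d) (Fin d) ℝ → Eucl d → ℝ → Eucl d → ℝ)
    (g : Eucl d → ℝ) (u : Eucl d → ℝ) : Prop :=
  ∀ x₀ ∈ Ω, ∀ φ : Eucl d → ℝ, ContDiffAt ℝ 2 φ x₀ →
    IsLocalMin (fun x => u x - φ x) x₀ →
    g x₀ ≤ G (hessAt φ x₀) (gradAt φ x₀) (u x₀) x₀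

def ViscSol {d : ℕ} (Ω : Set (Eucl d))
    (G : Matrix (Fin d) (Fin d) ℝ → Eucl d → ℝ → Eucl d → ℝ)
    (g : Eucl d → ℝ) (u : Eucl d → ℝ) : Prop :=
  ViscSubsol Ω G g u ∧ ViscSupersol Ω G g u

def UniformlyElliptic {d : ℕ} (lam Lam : ℝ) (X : Set (Eucl d)) (Tset : Set ℝ)
    (F : Matrix (Fin d) (Fin d) ℝ → Eucl d → ℝ → Eucl d → ℝ → ℝ) : Prop :=
  ∀ M N : Matrix (Fin d) (Fin d) ℝ, M.IsSymm → N.PosSemidef →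
    ∀ (P : Eucl d) (v : ℝ), ∀ x ∈ X, ∀ t ∈ Tset,
      -Lam * specNorm N ≤ F (M + N) P v x t - F M P v x t ∧
      F (M + N) P v x t - F M P v x t ≤ -lam * specNorm N

def IsModulus (σ : ℝ → ℝ) : Prop := Monotone σ ∧ Continuous σ ∧ σ 0 = 0

def StructureCondition {d : ℕ} (lam Lam gam : ℝ) (ω : ℝ → ℝ → ℝ)
    (X : Set (Eucl d)) (Tset : Set ℝ)
    (F : Matrix (Fin d) (Fin d) ℝ → Eucl d → ℝ → Eucl d → ℝ → ℝ) : Prop :=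
  (∀ R > 0, IsModulus (ω R)) ∧
  ∀ R > 0, ∀ M N : Matrix (Fin d) (Fin d) ℝ, M.IsSymm → N.IsSymm →
    ∀ (P Q : Eucl d) (r s : ℝ), |r| ≤ R → |s| ≤ R → ∀ x ∈ X, ∀ t ∈ Tset,
      pucciMinus lam Lam (M - N) - gam * ‖P - Q‖ - ω R (max (s - r) 0)
          ≤ F M P r x t - F N Q s x t ∧
      F M P r x t - F N Q s x t
          ≤ pucciPlus lam Lam (M - N) + gam * ‖P - Q‖ + ω R (max (r - s) 0)

noncomputable def supConv {d : ℕ} (Ω : Set (Eucl d)) (u : Eucl d → ℝ) (ε : ℝ) (x : Eucl d) : ℝ :=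
  sSup ((fun y => u y - ‖x - y‖ ^ 2 / (2 * ε)) '' closure Ω)

noncomputable def infConv {d : ℕ} (Ω : Set (Eucl d)) (u : Eucl d → ℝ) (ε : ℝ) (x : Eucl d) : ℝ :=
  sInf ((fun y => u y + ‖x - y‖ ^ 2 / (2 * ε)) '' closure Ω)

noncomputable def supNorm {d : ℕ} (Ω : Set (Eucl d)) (u : Eucl d → ℝ) : ℝ :=
  sSup ((fun y => |u y|) '' closure Ω)

def RotheStep {d : ℕ} (Ω : Set (Eucl d))
    (F : Matrix (Fin d) (Fin d) ℝ → Eucl d → ℝ → Eucl d → ℝ → ℝ)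
    (h : ℝ) (m : ℕ) (zprev znext : Eucl d → ℝ) : Prop :=
  ContinuousOn znext (closure Ω) ∧
  ViscSol Ω (fun M P r x => F M P r x ((m + 1) * h) + r / h) (fun x => zprev x / h) znext ∧
  ∀ x ∈ frontier Ω, znext x = 0

noncomputable def rotheInterp {d : ℕ} (z : ℕ → Eucl d → ℝ) (h : ℝ) (x : Eucl d) (t : ℝ) : ℝ :=
  ((⌊t / h⌋₊ + 1 : ℝ) * h - t) / h * z ⌊t / h⌋₊ x + (t - (⌊t / h⌋₊ : ℝ) * h) / h * z (⌊t / h⌋₊ + 1) x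

def HasSmoothBoundary {d : ℕ} (Ω : Set (Eucl d)) : Prop :=
  ∃ f : Eucl d → ℝ, ContDiff ℝ (⊤ : ℕ∞) f ∧ Ω = {x | f x < 0} ∧ ∀ x ∈ frontier Ω, fderiv ℝ f x ≠ 0

def C21 {d : ℕ} (φ : Eucl d → ℝ → ℝ) : Prop :=
  (∀ t, ContDiff ℝ 2 fun x => φ x t) ∧
  (∀ x, ContDiff ℝ 1 fun t => φ x t) ∧
  Continuous (fun p : Eucl d × ℝ => φ p.1 p.2) ∧
  Continuous (fun p : Eucl d × ℝ => hessAt (fun x => φ x p.2) p.1) ∧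
  Continuous (fun p : Eucl d × ℝ => gradAt (fun x => φ x p.2) p.1) ∧
  Continuous (fun p : Eucl d × ℝ => deriv (φ p.1) p.2)

def ParabolicViscSubsol {d : ℕ} (Ω : Set (Eucl d)) (T : ℝ)
    (F : Matrix (Fin d) (Fin d) ℝ → Eucl d → ℝ → Eucl d → ℝ → ℝ)
    (u : Eucl d × ℝ → ℝ) : Prop :=
  ∀ φ : Eucl d → ℝ → ℝ, C21 φ → ∀ ε > (0:ℝ),
    (∀ x ∈ closure Ω, ∀ t ∈ Icc (0:ℝ) T,
      ε ≤ deriv (φ x) t +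
        F (hessAt (fun y => φ y t) x) (gradAt (fun y => φ y t) x) (φ x t) x t) →
    ¬ ∃ p ∈ Ω ×ˢ Ioc (0:ℝ) T,
        IsLocalMaxOn (fun q : Eucl d × ℝ => u q - φ q.1 q.2) (Ω ×ˢ Ioc (0:ℝ) T) p ∧
        u p - φ p.1 p.2 = 0

def ParabolicViscSupersol {d : ℕ} (Ω : Set (Eucl d)) (T : ℝ)
    (F : Matrix (Fin d) (Fin d) ℝ → Eucl d → ℝ → Eucl d → ℝ → ℝ)
    (u : Eucl d × ℝ → ℝ) : Prop :=
  ∀ φ : Eucl d → ℝ → ℝ, C21 φ → ∀ ε > (0:ℝ),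
    (∀ x ∈ closure Ω, ∀ t ∈ Icc (0:ℝ) T,
      deriv (φ x) t +
        F (hessAt (fun y => φ y t) x) (gradAt (fun y => φ y t) x) (φ x t) x t ≤ -ε) →
    ¬ ∃ p ∈ Ω ×ˢ Ioc (0:ℝ) T,
        IsLocalMinOn (fun q : Eucl d × ℝ => u q - φ q.1 q.2) (Ω ×ˢ Ioc (0:ℝ) T) p ∧
        u p - φ p.1 p.2 = 0

/-! ### Test functions -/

section TestFunctions

variable {d : ℕ} {f g : Eucl d → ℝ} {φ ψ : Eucl d → ℝ → ℝ} {x : Eucl d}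

lemma differentiableAt_fderiv_apply (hf : ContDiffAt ℝ 2 f x) (v : Eucl d) :
    DifferentiableAt ℝ (fun y => fderiv ℝ f y v) x :=
  ((hf.fderiv_right (m := 1) (by norm_num)).differentiableAt (by norm_num)).clm_apply
    (differentiableAt_const v)

lemma gradAt_add (hf : DifferentiableAt ℝ f x) (hg : DifferentiableAt ℝ g x) :
    gradAt (fun y => f y + g y) x = gradAt f x + gradAt g x := by
  ext i
  simp [gradAt, fderiv_fun_add hf hg]

lemma hessAt_add (hf : ContDiffAt ℝ 2 f x) (hg : ContDiffAt ℝ 2 g x) :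
    hessAt (fun y => f y + g y) x = hessAt f x + hessAt g x := by
  ext i j
  have fderiv_add_apply : (fun y => fderiv ℝ (fun y => f y + g y) y (EuclideanSpace.single j 1))
      =ᶠ[𝓝 x] fun y => fderiv ℝ f y (EuclideanSpace.single j 1)
        + fderiv ℝ g y (EuclideanSpace.single j 1) := by
    filter_upwards [hf.eventually (by simp), hg.eventually (by simp)] with y hfy hgy
    rw [fderiv_fun_add (hfy.differentiableAt (by norm_num)) (hgy.differentiableAt (by norm_num)),
      add_apply]
  simp only [hessAt, Matrix.of_apply, Matrix.add_apply, fderiv_add_apply.fderiv_eq]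
  rw [fderiv_fun_add (differentiableAt_fderiv_apply hf _) (differentiableAt_fderiv_apply hg _),
    add_apply]

lemma gradAt_neg (f : Eucl d → ℝ) (x : Eucl d) : gradAt (fun y => -f y) x = -gradAt f x := by
  ext i
  simp [gradAt, fderiv_fun_neg]

lemma hessAt_neg (f : Eucl d → ℝ) (x : Eucl d) : hessAt (fun y => -f y) x = -hessAt f x := by
  ext i j
  simp [hessAt, fderiv_fun_neg]

lemma gradAt_const (c : ℝ) (x : Eucl d) : gradAt (fun _ => c) x = 0 := by
  ext i
  simp [gradAt]

lemma hessAt_const (c : ℝ) (x : Eucl d) : hessAt (fun _ => c) x = 0 := by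
  ext i j
  simp [hessAt]

lemma gradAt_sq_of_eq_zero (hf : DifferentiableAt ℝ f x) (hfx : f x = 0) :
    gradAt (fun y => f y ^ 2) x = 0 := by
  ext i
  simp [gradAt, fderiv_fun_pow 2 hf, hfx]

lemma hessAt_sq_of_eq_zero (hf : ContDiffAt ℝ 2 f x) (hfx : f x = 0) (hf'x : fderiv ℝ f x = 0) :
    hessAt (fun y => f y ^ 2) x = 0 := by
  ext i j
  have fderiv_sq_apply : (fun y => fderiv ℝ (fun y => f y ^ 2) y (EuclideanSpace.single j 1))
      =ᶠ[𝓝 x] fun y => 2 * f y * fderiv ℝ f y (EuclideanSpace.single j 1) := by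
    filter_upwards [hf.eventually (by simp)] with y hfy
    simp [fderiv_fun_pow 2 (hfy.differentiableAt (by norm_num))]
  have hf' : DifferentiableAt ℝ f x := hf.differentiableAt (by norm_num)
  simp only [hessAt, Matrix.of_apply, fderiv_sq_apply.fderiv_eq]
  rw [fderiv_fun_mul (hf'.const_mul 2) (differentiableAt_fderiv_apply hf _),
    fderiv_const_mul hf', hfx, hf'x]
  simp

lemma continuous_gradAt (hf : ContDiff ℝ 1 f) : Continuous (gradAt f) :=
  (EuclideanSpace.equiv (Fin d) ℝ).symm.continuous.comp <| continuous_pi fun _ =>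
    (hf.continuous_fderiv (by norm_num)).clm_apply continuous_const

lemma continuous_hessAt (hf : ContDiff ℝ 2 f) : Continuous (hessAt f) :=
  continuous_matrix fun _ _ =>
    (((hf.fderiv_right (m := 1) (by norm_num)).clm_apply contDiff_const).continuous_fderiv
      (by norm_num)).clm_apply continuous_const

lemma C21.add (hφ : C21 φ) (hψ : C21 ψ) : C21 (fun x t => φ x t + ψ x t) := by
  obtain ⟨hφx, hφt, hφc, hφ_hess, hφ_grad, hφ_deriv⟩ := hφ
  obtain ⟨hψx, hψt, hψc, hψ_hess, hψ_grad, hψ_deriv⟩ := hψ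
  refine ⟨fun t => (hφx t).add (hψx t), fun x => (hφt x).add (hψt x), hφc.add hψc, ?_, ?_, ?_⟩
  · simpa only [hessAt_add (hφx _).contDiffAt (hψx _).contDiffAt] using hφ_hess.fun_add hψ_hess
  · simpa only [gradAt_add ((hφx _).differentiable (by norm_num) _)
      ((hψx _).differentiable (by norm_num) _)] using hφ_grad.fun_add hψ_grad
  · simpa only [deriv_fun_add ((hφt _).differentiable (by norm_num) _)
      ((hψt _).differentiable (by norm_num) _)] using hφ_deriv.fun_add hψ_deriv

lemma C21.neg (hφ : C21 φ) : C21 (fun x t => -φ x t) := by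
  obtain ⟨hφx, hφt, hφc, hφ_hess, hφ_grad, hφ_deriv⟩ := hφ
  refine ⟨fun t => (hφx t).neg, fun x => (hφt x).neg, hφc.neg, ?_, ?_, ?_⟩
  · simpa only [hessAt_neg] using hφ_hess.fun_neg
  · simpa only [gradAt_neg] using hφ_grad.fun_neg
  · simpa only [deriv.fun_neg] using hφ_deriv.fun_neg

lemma c21_of_contDiff_space (hf : ContDiff ℝ 2 f) : C21 (fun x _ => f x) :=
  ⟨fun _ => hf, fun _ => contDiff_const, hf.continuous.comp continuous_fst,
    (continuous_hessAt hf).comp continuous_fst,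
    (continuous_gradAt (hf.of_le (by norm_num))).comp continuous_fst,
    by simpa only [deriv_const] using continuous_const⟩

lemma c21_of_contDiff_time {a : ℝ → ℝ} (ha : ContDiff ℝ 1 a) : C21 (fun (_ : Eucl d) t => a t) :=
  ⟨fun _ => contDiff_const, fun _ => ha, ha.continuous.comp continuous_snd,
    by simpa only [hessAt_const] using continuous_const,
    by simpa only [gradAt_const] using continuous_const,
    (ha.continuous_deriv (by norm_num)).comp continuous_snd⟩

/-- The penalization `‖x - x₀‖⁴ + (t - t₀)²`, used to make maxima at `(x₀, t₀)` strict. The power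
`4` is written as an iterated square to match `hessAt_sq_of_eq_zero`. -/
def penalty (x₀ : Eucl d) (t₀ : ℝ) (x : Eucl d) (t : ℝ) : ℝ :=
  (‖x - x₀‖ ^ 2) ^ 2 + (t - t₀) ^ 2

lemma penalty_self (x₀ : Eucl d) (t₀ : ℝ) : penalty x₀ t₀ x₀ t₀ = 0 := by
  simp [penalty]

lemma penalty_pos {x₀ : Eucl d} {t₀ : ℝ} {p : Eucl d × ℝ} (hp : p ≠ (x₀, t₀)) :
    0 < penalty x₀ t₀ p.1 p.2 := by
  unfold penalty
  rcases not_and_or.1 (mt Prod.ext_iff.2 hp) with hx | ht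
  · have : 0 < ‖p.1 - x₀‖ := norm_pos_iff.2 (sub_ne_zero.2 hx)
    positivity
  · have : p.2 - t₀ ≠ 0 := sub_ne_zero.2 ht
    positivity

lemma contDiff_norm_sub_sq (x₀ : Eucl d) : ContDiff ℝ 2 (fun x : Eucl d => ‖x - x₀‖ ^ 2) :=
  (contDiff_id.sub contDiff_const).norm_sq ℝ

lemma c21_penalty (x₀ : Eucl d) (t₀ : ℝ) : C21 (penalty x₀ t₀) :=
  (c21_of_contDiff_space ((contDiff_norm_sub_sq x₀).pow 2)).add
    (c21_of_contDiff_time ((contDiff_id.sub contDiff_const).pow 2))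

lemma gradAt_add_penalty {x₀ : Eucl d} (hf : DifferentiableAt ℝ f x₀) (t₀ : ℝ) :
    gradAt (fun x => f x + penalty x₀ t₀ x t₀) x₀ = gradAt f x₀ := by
  have hsq : DifferentiableAt ℝ (fun x => ‖x - x₀‖ ^ 2) x₀ :=
    (contDiff_norm_sub_sq x₀).differentiable (by norm_num) x₀
  simp only [penalty, sub_self, ne_eq, OfNat.ofNat_ne_zero, not_false_eq_true, zero_pow, add_zero]
  rw [gradAt_add hf (hsq.fun_pow 2), gradAt_sq_of_eq_zero hsq (by simp), add_zero]

lemma hessAt_add_penalty {x₀ : Eucl d} (hf : ContDiffAt ℝ 2 f x₀) (t₀ : ℝ) :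
    hessAt (fun x => f x + penalty x₀ t₀ x t₀) x₀ = hessAt f x₀ := by
  have hsq : ContDiffAt ℝ 2 (fun x => ‖x - x₀‖ ^ 2) x₀ := (contDiff_norm_sub_sq x₀).contDiffAt
  have hsq_fderiv : fderiv ℝ (fun x => ‖x - x₀‖ ^ 2) x₀ = 0 :=
    IsLocalMin.fderiv_eq_zero (Eventually.of_forall fun x => by simp)
  simp only [penalty, sub_self, ne_eq, OfNat.ofNat_ne_zero, not_false_eq_true, zero_pow, add_zero]
  rw [hessAt_add hf (hsq.pow 2), hessAt_sq_of_eq_zero hsq (by simp) hsq_fderiv, add_zero]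

lemma deriv_add_penalty {a : ℝ → ℝ} {t₀ : ℝ} (ha : DifferentiableAt ℝ a t₀) (x₀ : Eucl d) :
    deriv (fun t => a t + penalty x₀ t₀ x₀ t) t₀ = deriv a t₀ := by
  have hpen : deriv (penalty x₀ t₀ x₀) t₀ = 0 :=
    IsLocalMin.deriv_eq_zero (Eventually.of_forall fun t => by simp [penalty, sq_nonneg])
  rw [deriv_fun_add ha (((c21_penalty x₀ t₀).2.1 x₀).differentiable (by norm_num) t₀), hpen,
    add_zero]

end TestFunctions

/-! ### Convergence of maximum points -/

lemma tendsto_of_tendstoUniformlyOn_of_strict_max {X ι : Type*} [TopologicalSpace X]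
    {l : Filter ι} {K : Set X} {f : X → ℝ} {g : ι → X → ℝ} {a : X} {p q : ι → X}
    (hK : IsCompact K) (hf : ContinuousOn f K) (ha : a ∈ K)
    (hstrict : ∀ x ∈ K, x ≠ a → f x < f a) (hg : TendstoUniformlyOn g f l K)
    (hp : Tendsto p l (𝓝[K] a)) (hqK : ∀ᶠ i in l, q i ∈ K)
    (hpq : ∀ᶠ i in l, g i (p i) ≤ g i (q i)) : Tendsto q l (𝓝 a) := by
  refine tendsto_nhds.2 fun V hV haV => ?_
  have hgp : Tendsto (fun i => g i (p i)) l (𝓝 (f a)) := hg.tendsto_comp (hf a ha) hp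
  rcases (K \ V).eq_empty_or_nonempty with hKV | hKV
  · filter_upwards [hqK] with i hi
    exact sdiff_eq_empty.1 hKV hi
  obtain ⟨b, hb, hbmax⟩ := (hK.diff hV).exists_isMaxOn hKV (hf.mono sdiff_subset)
  have hba : f b < f a := hstrict b hb.1 fun h => hb.2 (h ▸ haV)
  obtain ⟨c, hbc, hca⟩ := exists_between hba
  filter_upwards [hqK, hpq, hgp.eventually_const_lt hca,
    Metric.tendstoUniformlyOn_iff.1 hg (c - f b) (sub_pos.2 hbc)] with i hqi hpqi hcp hdist
  by_contra hqV
  have hfq : f (q i) ≤ f b := hbmax ⟨hqi, hqV⟩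
  have hgq : g i (q i) - f (q i) < c - f b :=
    (le_abs_self _).trans_lt (by rw [← Real.dist_eq, dist_comm]; exact hdist _ hqi)
  linarith

lemma exists_max_of_isCompact_of_finite {X κ : Type*} [TopologicalSpace X] {B : Set X}
    {S : Set κ} {f : κ → X → ℝ} (hB : IsCompact B) (hBne : B.Nonempty) (hS : S.Finite)
    (hSne : S.Nonempty) (hf : ∀ m ∈ S, ContinuousOn (f m) B) :
    ∃ x ∈ B, ∃ m ∈ S, ∀ y ∈ B, ∀ n ∈ S, f n y ≤ f m x := by
  have hmax : ∀ m, ∃ x, m ∈ S → x ∈ B ∧ IsMaxOn (f m) B x := fun m => by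
    by_cases hm : m ∈ S
    · exact (hB.exists_isMaxOn hBne (hf m hm)).imp fun x hx _ => hx
    · exact ⟨hBne.some, fun h => absurd h hm⟩
  choose x hx using hmax
  obtain ⟨m, hm, hmmax⟩ := S.exists_max_image (fun m => f m (x m)) hS hSne
  exact ⟨x m, (hx m hm).1, m, hm, fun y hy n hn => ((hx n hn).2 hy).trans (hmmax n hn)⟩

lemma tendsto_floor_div_mul_nhdsGT_zero {t : ℝ} (ht : 0 ≤ t) :
    Tendsto (fun h : ℝ => (⌊t / h⌋₊ : ℝ) * h) (𝓝[>] 0) (𝓝[≤] t) := by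
  refine tendsto_nhdsWithin_iff.2 ⟨?_, ?_⟩
  · simpa only [Function.comp_def, div_inv_eq_mul, ← div_eq_mul_inv] using
      (tendsto_nat_floor_mul_div_atTop ht).comp tendsto_inv_nhdsGT_zero
  · filter_upwards [self_mem_nhdsWithin] with h hh
    exact (le_div_iff₀ hh).1 (Nat.floor_le (div_nonneg ht (le_of_lt hh)))

/-! ### The Rothe scheme -/

section Rothe

variable {d : ℕ} {Ω : Set (Eucl d)} {I : Set ℝ} {T : ℝ}
  {F : Matrix (Fin d) (Fin d) ℝ → Eucl d → ℝ → Eucl d → ℝ → ℝ}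

/-- Joint continuity of an operator `F(M, P, r, x, t)` for `x ∈ Ω` and `t ∈ I`. -/
def ContinuousOperatorOn (Ω : Set (Eucl d)) (I : Set ℝ)
    (F : Matrix (Fin d) (Fin d) ℝ → Eucl d → ℝ → Eucl d → ℝ → ℝ) : Prop :=
  ContinuousOn
    (fun q : Matrix (Fin d) (Fin d) ℝ × Eucl d × ℝ × Eucl d × ℝ =>
      F q.1 q.2.1 q.2.2.1 q.2.2.2.1 q.2.2.2.2)
    (univ ×ˢ univ ×ˢ univ ×ˢ Ω ×ˢ I)

/-- The operator `-F(-M, -P, -r, x, t)`, whose subsolutions are the negatives of the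
supersolutions of `F`. -/
def reflectOperator (F : Matrix (Fin d) (Fin d) ℝ → Eucl d → ℝ → Eucl d → ℝ → ℝ) :
    Matrix (Fin d) (Fin d) ℝ → Eucl d → ℝ → Eucl d → ℝ → ℝ :=
  fun M P r x t => -F (-M) (-P) (-r) x t

/-- A sequence of subsolutions of the implicit Euler (Rothe) scheme of step `h`, continuous from
index `1` on. Initial and boundary values are not part of the notion. -/
def IsRotheSubsol (Ω : Set (Eucl d))
    (F : Matrix (Fin d) (Fin d) ℝ → Eucl d → ℝ → Eucl d → ℝ → ℝ) (h : ℝ)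
    (z : ℕ → Eucl d → ℝ) : Prop :=
  ∀ m : ℕ, ContinuousOn (z (m + 1)) Ω ∧
    ViscSubsol Ω (fun M P r x => F M P r x ((m + 1) * h) + r / h) (fun x => z m x / h) (z (m + 1))

/-- The supersolution counterpart of `IsRotheSubsol`. -/
def IsRotheSupersol (Ω : Set (Eucl d))
    (F : Matrix (Fin d) (Fin d) ℝ → Eucl d → ℝ → Eucl d → ℝ → ℝ) (h : ℝ)
    (z : ℕ → Eucl d → ℝ) : Prop :=
  ∀ m : ℕ, ContinuousOn (z (m + 1)) Ω ∧
    ViscSupersol Ω (fun M P r x => F M P r x ((m + 1) * h) + r / h) (fun x => z m x / h)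
      (z (m + 1))

/-- `(x, mh)` maximizes `z_n(y) - ψ(y, nh)` among the points `(y, nh)` of `K`. -/
structure IsGridMaxOn (z : ℕ → Eucl d → ℝ) (ψ : Eucl d → ℝ → ℝ) (h : ℝ) (K : Set (Eucl d × ℝ))
    (x : Eucl d) (m : ℕ) : Prop where
  mem : (x, m * h) ∈ K
  le : ∀ y, ∀ n : ℕ, (y, n * h) ∈ K → z n y - ψ y (n * h) ≤ z m x - ψ x (m * h)

/-- The closed cylinder of radius and height `r` with top centre `(x₀, t₀)`. -/
def backwardCylinder (x₀ : Eucl d) (t₀ r : ℝ) : Set (Eucl d × ℝ) :=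
  closedBall x₀ r ×ˢ Icc (t₀ - r) t₀

lemma isCompact_backwardCylinder (x₀ : Eucl d) (t₀ r : ℝ) :
    IsCompact (backwardCylinder x₀ t₀ r) :=
  (isCompact_closedBall x₀ r).prod isCompact_Icc

lemma mem_backwardCylinder_self (x₀ : Eucl d) (t₀ : ℝ) {r : ℝ} (hr : 0 ≤ r) :
    (x₀, t₀) ∈ backwardCylinder x₀ t₀ r :=
  ⟨mem_closedBall_self hr, by linarith, le_rfl⟩

lemma exists_backwardCylinder_subset (hΩ : IsOpen Ω) {x₀ : Eucl d} {t₀ : ℝ} (hx₀ : x₀ ∈ Ω)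
    (ht₀ : t₀ ∈ Ioc 0 T) {s : Set (Eucl d × ℝ)} (hs : s ∈ 𝓝[Ω ×ˢ Ioc 0 T] (x₀, t₀)) :
    ∃ r > 0, r < t₀ ∧ backwardCylinder x₀ t₀ r ⊆ (Ω ×ˢ Ioc 0 T) ∩ s := by
  obtain ⟨a, ha, has⟩ := Metric.mem_nhdsWithin_iff.1 hs
  obtain ⟨b, hb, hbΩ⟩ := Metric.isOpen_iff.1 hΩ x₀ hx₀
  obtain ⟨r, hr, hrlt⟩ := exists_between (lt_min (lt_min ha hb) ht₀.1)
  obtain ⟨⟨hra, hrb⟩, hrt⟩ : (r < a ∧ r < b) ∧ r < t₀ := by simpa only [lt_min_iff] using hrlt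
  refine ⟨r, hr, hrt, fun p ⟨hpx, hpt⟩ => ?_⟩
  have hpΩ : p ∈ Ω ×ˢ Ioc 0 T :=
    ⟨hbΩ (closedBall_subset_ball hrb hpx), by linarith [hpt.1], hpt.2.trans ht₀.2⟩
  have hp_time : dist p.2 t₀ ≤ r := by
    rw [Real.dist_eq, abs_le]
    constructor <;> linarith [hpt.1, hpt.2]
  exact ⟨hpΩ, has ⟨(max_le (mem_closedBall.1 hpx) hp_time).trans_lt hra, hpΩ⟩⟩

lemma rotheInterp_natCast_mul (z : ℕ → Eucl d → ℝ) {h : ℝ} (hh : h ≠ 0) (m : ℕ) (x : Eucl d) :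
    rotheInterp z h x (m * h) = z m x := by
  have hfloor : ⌊(m : ℝ) * h / h⌋₊ = m := by
    rw [mul_div_cancel_right₀ _ hh, Nat.floor_natCast]
  rw [rotheInterp, hfloor]
  field_simp
  ring

lemma rotheInterp_neg (z : ℕ → Eucl d → ℝ) (h : ℝ) (x : Eucl d) (t : ℝ) :
    rotheInterp (fun m y => -z m y) h x t = -rotheInterp z h x t := by
  simp only [rotheInterp]
  ring

lemma exists_isGridMaxOn {z : ℕ → Eucl d → ℝ} {ψ : Eucl d → ℝ → ℝ} {h a b : ℝ} {B : Set (Eucl d)}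
    (hh : 0 < h) (ha : 0 < a) (hB : IsCompact B) (hBne : B.Nonempty)
    (hgrid : ∃ m : ℕ, (m : ℝ) * h ∈ Icc a b) (hz : ∀ m, ContinuousOn (z (m + 1)) B)
    (hψ : ∀ t, ContinuousOn (fun x => ψ x t) B) :
    ∃ x m, IsGridMaxOn z ψ h (B ×ˢ Icc a b) x m := by
  have hfin : {m : ℕ | (m : ℝ) * h ∈ Icc a b}.Finite :=
    (finite_Iic ⌊b / h⌋₊).subset fun m hm => Nat.le_floor ((le_div_iff₀ hh).2 hm.2)
  have hcont : ∀ m ∈ {m : ℕ | (m : ℝ) * h ∈ Icc a b},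
      ContinuousOn (fun x => z m x - ψ x (m * h)) B := by
    rintro (_ | m) hm
    · exact absurd hm.1 (by simpa using ha)
    · exact (hz m).sub (hψ _)
  obtain ⟨x, hx, m, hm, hmax⟩ := exists_max_of_isCompact_of_finite hB hBne hfin hgrid hcont
  exact ⟨x, m, ⟨hx, hm⟩, fun y n hyn => hmax y hyn.1 n hyn.2⟩

lemma IsRotheSubsol.exists_deriv_add_le_zero {h : ℝ} {z : ℕ → Eucl d → ℝ} {ψ : Eucl d → ℝ → ℝ}
    {B : Set (Eucl d)} {x : Eucl d} {m : ℕ} (hz : IsRotheSubsol Ω F h z) (hh : 0 < h)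
    (hψ : C21 ψ) (hx : x ∈ Ω) (hmax : IsGridMaxOn z ψ h (B ×ˢ I) x m) (hB : B ∈ 𝓝 x)
    (hm : 0 < (m : ℝ) * h) (hprev : m * h - h ∈ I) :
    ∃ τ ∈ Ioo (m * h - h) (m * h), deriv (ψ x) τ +
      F (hessAt (fun y => ψ y (m * h)) x) (gradAt (fun y => ψ y (m * h)) x) (z m x) x (m * h)
        ≤ 0 := by
  obtain ⟨n, rfl⟩ : ∃ n, m = n + 1 := Nat.exists_eq_succ_of_ne_zero fun h0 => by simp [h0] at hm
  have hprev_eq : ((n + 1 : ℕ) : ℝ) * h - h = n * h := by push_cast; ring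
  rw [hprev_eq] at hprev ⊢
  obtain ⟨τ, hτ, hslope⟩ := exists_deriv_eq_slope (ψ x)
    (show (n : ℝ) * h < (n + 1 : ℕ) * h by linarith) (hψ.2.1 x).continuous.continuousOn
    ((hψ.2.1 x).differentiable (by norm_num)).differentiableOn
  have hlocal : IsLocalMax (fun y => z (n + 1) y - ψ y ((n + 1 : ℕ) * h)) x := by
    filter_upwards [hB] with y hy
    exact hmax.le y (n + 1) ⟨hy, hmax.mem.2⟩
  have hvisc := (hz n).2 x hx _ (hψ.1 _).contDiffAt hlocal
  have htime : z n x - ψ x (n * h) ≤ z (n + 1) x - ψ x ((n + 1 : ℕ) * h) :=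
    hmax.le x n ⟨mem_of_mem_nhds hB, hprev⟩
  have hquot : deriv (ψ x) τ ≤ z (n + 1) x / h - z n x / h := by
    rw [hslope, ← sub_div, show ((n + 1 : ℕ) : ℝ) * h - n * h = h by push_cast; ring]
    exact div_le_div_of_nonneg_right (by linarith) hh.le
  refine ⟨τ, hτ, ?_⟩
  push_cast at hvisc ⊢
  linarith

section Limit

variable {ι : Type*} {l : Filter ι} {h : ι → ℝ} {z : ι → ℕ → Eucl d → ℝ} {U : Eucl d × ℝ → ℝ}
  {ψ : Eucl d → ℝ → ℝ} {x₀ : Eucl d} {t₀ r : ℝ}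

lemma eventually_exists_isGridMaxOn (hh : Tendsto h l (𝓝[>] 0))
    (hz : ∀ᶠ i in l, ∀ m, ContinuousOn (z i (m + 1)) (closedBall x₀ r)) (hr : 0 < r)
    (hrt : r < t₀) (hψ : C21 ψ) :
    ∀ᶠ i in l, ∃ q : Eucl d × ℕ,
      IsGridMaxOn (z i) ψ (h i) (backwardCylinder x₀ t₀ r) q.1 q.2 := by
  have hfloor := (tendsto_floor_div_mul_nhdsGT_zero (hr.trans hrt).le).comp hh
  filter_upwards [hh self_mem_nhdsWithin, hz, hfloor (Icc_mem_nhdsLE (sub_lt_self t₀ hr))]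
    with i hi hzi hfloor_i
  obtain ⟨x, m, hmax⟩ := exists_isGridMaxOn hi (sub_pos.2 hrt) (isCompact_closedBall x₀ r)
    ⟨x₀, mem_closedBall_self hr.le⟩ ⟨⌊t₀ / h i⌋₊, hfloor_i⟩ hzi
    fun t => (hψ.1 t).continuous.continuousOn
  exact ⟨(x, m), hmax⟩

lemma tendsto_of_isGridMaxOn (hh : Tendsto h l (𝓝[>] 0))
    (hlim : TendstoUniformlyOn (fun i (p : Eucl d × ℝ) => rotheInterp (z i) (h i) p.1 p.2) U l
      (backwardCylinder x₀ t₀ r))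
    (hr : 0 < r) (hrt : r < t₀) (hU : ContinuousOn U (backwardCylinder x₀ t₀ r)) (hψ : C21 ψ)
    (hstrict : ∀ p ∈ backwardCylinder x₀ t₀ r, p ≠ (x₀, t₀) →
      U p - ψ p.1 p.2 < U (x₀, t₀) - ψ x₀ t₀)
    {x : ι → Eucl d} {m : ι → ℕ}
    (hmax : ∀ᶠ i in l, IsGridMaxOn (z i) ψ (h i) (backwardCylinder x₀ t₀ r) (x i) (m i)) :
    Tendsto (fun i => (x i, m i * h i)) l (𝓝[backwardCylinder x₀ t₀ r] (x₀, t₀)) := by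
  have hfloor : Tendsto (fun i => (⌊t₀ / h i⌋₊ : ℝ) * h i) l (𝓝[≤] t₀) :=
    (tendsto_floor_div_mul_nhdsGT_zero (hr.trans hrt).le).comp hh
  have hfloor_mem : ∀ᶠ i in l, (x₀, ⌊t₀ / h i⌋₊ * h i) ∈ backwardCylinder x₀ t₀ r := by
    filter_upwards [hfloor (Icc_mem_nhdsLE (sub_lt_self t₀ hr))] with i hfloor_i
    exact ⟨mem_closedBall_self hr.le, hfloor_i⟩
  have hlim_sub : TendstoUniformlyOn
      (fun i (p : Eucl d × ℝ) => rotheInterp (z i) (h i) p.1 p.2 - ψ p.1 p.2)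
      (fun p => U p - ψ p.1 p.2) l (backwardCylinder x₀ t₀ r) := by
    simpa only [Metric.tendstoUniformlyOn_iff, dist_sub_right] using hlim
  refine tendsto_nhdsWithin_iff.2 ⟨?_, hmax.mono fun i hi => hi.mem⟩
  refine tendsto_of_tendstoUniformlyOn_of_strict_max (isCompact_backwardCylinder x₀ t₀ r)
    (hU.sub hψ.2.2.1.continuousOn) (mem_backwardCylinder_self x₀ t₀ hr.le) hstrict hlim_sub
    (tendsto_nhdsWithin_iff.2 ⟨tendsto_const_nhds.prodMk_nhds
      (hfloor.mono_right nhdsWithin_le_nhds), hfloor_mem⟩)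
    (hmax.mono fun i hi => hi.mem) ?_
  filter_upwards [hh self_mem_nhdsWithin, hfloor_mem, hmax] with i hi hfloor_i hmax_i
  simpa only [rotheInterp_natCast_mul _ (ne_of_gt hi)] using hmax_i.le x₀ _ hfloor_i

lemma ContinuousOperatorOn.tendsto (hF : ContinuousOperatorOn Ω I F) (hx₀ : x₀ ∈ Ω)
    (ht₀ : t₀ ∈ I) {M : ι → Matrix (Fin d) (Fin d) ℝ} {P : ι → Eucl d} {s : ι → ℝ}
    {x : ι → Eucl d} {t : ι → ℝ} {M₀ : Matrix (Fin d) (Fin d) ℝ} {P₀ : Eucl d} {s₀ : ℝ}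
    (hM : Tendsto M l (𝓝 M₀)) (hP : Tendsto P l (𝓝 P₀)) (hs : Tendsto s l (𝓝 s₀))
    (hxt : Tendsto (fun i => (x i, t i)) l (𝓝[Ω ×ˢ I] (x₀, t₀))) :
    Tendsto (fun i => F (M i) (P i) (s i) (x i) (t i)) l (𝓝 (F M₀ P₀ s₀ x₀ t₀)) := by
  have hjet : Tendsto (fun i => (M i, P i, s i, x i, t i)) l
      (𝓝[univ ×ˢ univ ×ˢ univ ×ˢ Ω ×ˢ I] (M₀, P₀, s₀, x₀, t₀)) :=
    tendsto_nhdsWithin_iff.2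
      ⟨hM.prodMk_nhds (hP.prodMk_nhds (hs.prodMk_nhds (hxt.mono_right nhdsWithin_le_nhds))),
        (eventually_mem_of_tendsto_nhdsWithin hxt).mono fun _ hi =>
          ⟨trivial, trivial, trivial, hi⟩⟩
  exact (hF (M₀, P₀, s₀, x₀, t₀) ⟨trivial, trivial, trivial, hx₀, ht₀⟩).tendsto.comp hjet

lemma ContinuousOperatorOn.tendsto_deriv_add (hF : ContinuousOperatorOn Ω I F) (hψ : C21 ψ)
    (hx₀ : x₀ ∈ Ω) (ht₀ : t₀ ∈ I) {x : ι → Eucl d} {t s τ : ι → ℝ} {s₀ : ℝ}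
    (hxt : Tendsto (fun i => (x i, t i)) l (𝓝[Ω ×ˢ I] (x₀, t₀))) (hs : Tendsto s l (𝓝 s₀))
    (hτ : Tendsto τ l (𝓝 t₀)) :
    Tendsto (fun i => deriv (ψ (x i)) (τ i) + F (hessAt (fun y => ψ y (t i)) (x i))
        (gradAt (fun y => ψ y (t i)) (x i)) (s i) (x i) (t i)) l
      (𝓝 (deriv (ψ x₀) t₀ +
        F (hessAt (fun y => ψ y t₀) x₀) (gradAt (fun y => ψ y t₀) x₀) s₀ x₀ t₀)) := by
  obtain ⟨-, -, -, hhess, hgrad, hderiv⟩ := hψ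
  have hxt' : Tendsto (fun i => (x i, t i)) l (𝓝 (x₀, t₀)) := hxt.mono_right nhdsWithin_le_nhds
  have hderiv_lim : Tendsto (fun i => deriv (ψ (x i)) (τ i)) l (𝓝 (deriv (ψ x₀) t₀)) :=
    hderiv.continuousAt.tendsto.comp (hxt'.fst_nhds.prodMk_nhds hτ)
  have hhess_lim : Tendsto (fun i => hessAt (fun y => ψ y (t i)) (x i)) l
      (𝓝 (hessAt (fun y => ψ y t₀) x₀)) := hhess.continuousAt.tendsto.comp hxt'
  have hgrad_lim : Tendsto (fun i => gradAt (fun y => ψ y (t i)) (x i)) l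
      (𝓝 (gradAt (fun y => ψ y t₀) x₀)) := hgrad.continuousAt.tendsto.comp hxt'
  exact hderiv_lim.add (hF.tendsto hx₀ ht₀ hhess_lim hgrad_lim hs hxt)

lemma eventually_exists_deriv_add_le_zero (hh : Tendsto h l (𝓝[>] 0))
    (hz : ∀ᶠ i in l, IsRotheSubsol Ω F (h i) (z i)) (hr : 0 < r) (hrt : r < t₀)
    (hK : backwardCylinder x₀ t₀ r ⊆ Ω ×ˢ I) (hψ : C21 ψ) {x : ι → Eucl d} {m : ι → ℕ}
    (hmax : ∀ᶠ i in l, IsGridMaxOn (z i) ψ (h i) (backwardCylinder x₀ t₀ r) (x i) (m i))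
    (hxm : Tendsto (fun i => (x i, m i * h i)) l (𝓝[backwardCylinder x₀ t₀ r] (x₀, t₀))) :
    ∀ᶠ i in l, ∃ τ ∈ Ioo (m i * h i - h i) (m i * h i),
      deriv (ψ (x i)) τ + F (hessAt (fun y => ψ y (m i * h i)) (x i))
        (gradAt (fun y => ψ y (m i * h i)) (x i)) (z i (m i) (x i)) (x i) (m i * h i) ≤ 0 := by
  have hxm' := hxm.mono_right nhdsWithin_le_nhds
  have htime : Tendsto (fun i => m i * h i) l (𝓝 t₀) := hxm'.snd_nhds
  have hprev : Tendsto (fun i => m i * h i - h i) l (𝓝 t₀) := by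
    simpa only [sub_zero] using htime.sub (hh.mono_right nhdsWithin_le_nhds)
  filter_upwards [hh self_mem_nhdsWithin, hz, hmax, htime.eventually_const_lt (hr.trans hrt),
    hprev.eventually_const_le (sub_lt_self t₀ hr),
    hxm'.fst_nhds.eventually (ball_mem_nhds x₀ hr)] with i hi hzi hmax_i hpos hprev_i hball_i
  exact hzi.exists_deriv_add_le_zero hi hψ (hK hmax_i.mem).1 hmax_i
    (mem_of_superset (isOpen_ball.mem_nhds hball_i) ball_subset_closedBall) hpos
    ⟨hprev_i, (sub_le_self _ (le_of_lt hi)).trans hmax_i.mem.2.2⟩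

variable [l.NeBot]

lemma deriv_add_le_zero_of_strict_max (hF : ContinuousOperatorOn Ω I F)
    (hh : Tendsto h l (𝓝[>] 0)) (hz : ∀ᶠ i in l, IsRotheSubsol Ω F (h i) (z i))
    (hlim : TendstoUniformlyOn (fun i (p : Eucl d × ℝ) => rotheInterp (z i) (h i) p.1 p.2) U l
      (backwardCylinder x₀ t₀ r))
    (hr : 0 < r) (hrt : r < t₀) (hK : backwardCylinder x₀ t₀ r ⊆ Ω ×ˢ I)
    (hU : ContinuousOn U (backwardCylinder x₀ t₀ r)) (hψ : C21 ψ)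
    (hstrict : ∀ p ∈ backwardCylinder x₀ t₀ r, p ≠ (x₀, t₀) →
      U p - ψ p.1 p.2 < U (x₀, t₀) - ψ x₀ t₀) :
    deriv (ψ x₀) t₀ + F (hessAt (fun y => ψ y t₀) x₀) (gradAt (fun y => ψ y t₀) x₀)
      (U (x₀, t₀)) x₀ t₀ ≤ 0 := by
  have hmem₀ := mem_backwardCylinder_self x₀ t₀ hr.le
  have hball : closedBall x₀ r ⊆ Ω := fun y hy => (@hK (y, t₀) ⟨hy, hmem₀.2⟩).1
  obtain ⟨q, hmax⟩ := (eventually_exists_isGridMaxOn (z := z) (ψ := ψ) hh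
    (hz.mono fun i hi m => (hi m).1.mono hball) hr hrt hψ).choice
  have hq : Tendsto (fun i => ((q i).1, (q i).2 * h i)) l
      (𝓝[backwardCylinder x₀ t₀ r] (x₀, t₀)) :=
    tendsto_of_isGridMaxOn hh hlim hr hrt hU hψ hstrict hmax
  have hvalue : Tendsto (fun i => z i (q i).2 (q i).1) l (𝓝 (U (x₀, t₀))) := by
    refine (hlim.tendsto_comp (hU _ hmem₀) hq).congr' ?_
    filter_upwards [hh self_mem_nhdsWithin] with i hi
    exact rotheInterp_natCast_mul _ (ne_of_gt hi) _ _
  have htime : Tendsto (fun i => (q i).2 * h i) l (𝓝 t₀) :=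
    (hq.mono_right nhdsWithin_le_nhds).snd_nhds
  have hprev : Tendsto (fun i => (q i).2 * h i - h i) l (𝓝 t₀) := by
    simpa only [sub_zero] using htime.sub (hh.mono_right nhdsWithin_le_nhds)
  obtain ⟨τ, hτ⟩ := (eventually_exists_deriv_add_le_zero hh hz hr hrt hK hψ hmax hq).choice
  have hτ_lim : Tendsto τ l (𝓝 t₀) :=
    tendsto_of_tendsto_of_tendsto_of_le_of_le' hprev htime (hτ.mono fun i hi => hi.1.1.le)
      (hτ.mono fun i hi => hi.1.2.le)
  exact le_of_tendsto (hF.tendsto_deriv_add hψ (hK hmem₀).1 (hK hmem₀).2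
    (hq.mono_right (nhdsWithin_mono _ hK)) hvalue hτ_lim) (hτ.mono fun i hi => hi.2)

lemma deriv_add_le_zero_of_isLocalMaxOn (hΩ : IsOpen Ω)
    (hF : ContinuousOperatorOn Ω (Ioc 0 T) F) (hh : Tendsto h l (𝓝[>] 0))
    (hz : ∀ᶠ i in l, IsRotheSubsol Ω F (h i) (z i))
    (hU : ContinuousOn U (Ω ×ˢ Ioc 0 T))
    (hlim : TendstoLocallyUniformlyOn
      (fun i (p : Eucl d × ℝ) => rotheInterp (z i) (h i) p.1 p.2) U l (Ω ×ˢ Ioc 0 T))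
    (hψ : C21 ψ) (hx₀ : x₀ ∈ Ω) (ht₀ : t₀ ∈ Ioc 0 T)
    (hmax : IsLocalMaxOn (fun p : Eucl d × ℝ => U p - ψ p.1 p.2) (Ω ×ˢ Ioc 0 T) (x₀, t₀)) :
    deriv (ψ x₀) t₀ + F (hessAt (fun y => ψ y t₀) x₀) (gradAt (fun y => ψ y t₀) x₀)
      (U (x₀, t₀)) x₀ t₀ ≤ 0 := by
  obtain ⟨r, hr, hrt, hsub⟩ := exists_backwardCylinder_subset hΩ hx₀ ht₀ hmax
  have hK : backwardCylinder x₀ t₀ r ⊆ Ω ×ˢ Ioc 0 T := fun p hp => (hsub hp).1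
  have hunif := (tendstoLocallyUniformlyOn_iff_tendstoUniformlyOn_of_compact
    (isCompact_backwardCylinder x₀ t₀ r)).1 (hlim.mono hK)
  have hpenalized := deriv_add_le_zero_of_strict_max
    (ψ := fun x t => ψ x t + penalty x₀ t₀ x t) hF hh hz hunif hr hrt hK (hU.mono hK)
    (hψ.add (c21_penalty x₀ t₀)) fun p hp hne => by
      have hle : U p - ψ p.1 p.2 ≤ U (x₀, t₀) - ψ x₀ t₀ := (hsub hp).2
      linarith [penalty_pos hne, penalty_self x₀ t₀]
  rwa [deriv_add_penalty ((hψ.2.1 x₀).differentiable (by norm_num) t₀),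
    hessAt_add_penalty (hψ.1 t₀).contDiffAt,
    gradAt_add_penalty ((hψ.1 t₀).differentiable (by norm_num) x₀)] at hpenalized

theorem ParabolicViscSubsol.of_rothe_limit (hΩ : IsOpen Ω)
    (hF : ContinuousOperatorOn Ω (Ioc 0 T) F) (hh : Tendsto h l (𝓝[>] 0))
    (hz : ∀ᶠ i in l, IsRotheSubsol Ω F (h i) (z i))
    (hU : ContinuousOn U (Ω ×ˢ Ioc 0 T))
    (hlim : TendstoLocallyUniformlyOn
      (fun i (p : Eucl d × ℝ) => rotheInterp (z i) (h i) p.1 p.2) U l (Ω ×ˢ Ioc 0 T)) :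
    ParabolicViscSubsol Ω T F U := by
  rintro φ hφ ε hε hstrict ⟨⟨x₀, t₀⟩, ⟨hx₀, ht₀⟩, hmax, htouch⟩
  have hle := deriv_add_le_zero_of_isLocalMaxOn hΩ hF hh hz hU hlim hφ hx₀ ht₀ hmax
  rw [show U (x₀, t₀) = φ x₀ t₀ from sub_eq_zero.1 htouch] at hle
  linarith [hstrict x₀ (subset_closure hx₀) t₀ (Ioc_subset_Icc_self ht₀)]

end Limit

/-! ### Reflection -/

lemma ContinuousOperatorOn.reflect (hF : ContinuousOperatorOn Ω I F) :
    ContinuousOperatorOn Ω I (reflectOperator F) := by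
  have hneg : Continuous fun q : Matrix (Fin d) (Fin d) ℝ × Eucl d × ℝ × Eucl d × ℝ =>
      (-q.1, -q.2.1, -q.2.2.1, q.2.2.2.1, q.2.2.2.2) := by fun_prop
  exact (ContinuousOn.comp hF hneg.continuousOn fun _ hq =>
    ⟨trivial, trivial, trivial, hq.2.2.2⟩).neg

lemma ViscSupersol.neg {G : Matrix (Fin d) (Fin d) ℝ → Eucl d → ℝ → Eucl d → ℝ}
    {g u : Eucl d → ℝ} (hu : ViscSupersol Ω G g u) :
    ViscSubsol Ω (fun M P r x => -G (-M) (-P) (-r) x) (fun x => -g x) (fun x => -u x) := by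
  intro x₀ hx₀ φ hφ hmax
  have hmin : IsLocalMin (fun x => u x - -φ x) x₀ := by
    simpa only [neg_sub', neg_neg] using hmax.neg
  simpa only [hessAt_neg, gradAt_neg, neg_neg, neg_le_neg_iff] using hu x₀ hx₀ _ hφ.neg hmin

lemma IsRotheSupersol.neg {h : ℝ} {z : ℕ → Eucl d → ℝ} (hz : IsRotheSupersol Ω F h z) :
    IsRotheSubsol Ω (reflectOperator F) h (fun m x => -z m x) := by
  refine fun m => ⟨(hz m).1.neg, ?_⟩
  convert (hz m).2.neg using 2
  · funext P r x
    simp only [reflectOperator]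
    ring
  · ring

lemma ParabolicViscSubsol.neg {u : Eucl d × ℝ → ℝ}
    (hu : ParabolicViscSubsol Ω T (reflectOperator F) (fun p => -u p)) :
    ParabolicViscSupersol Ω T F u := by
  rintro φ hφ ε hε hstrict ⟨p, hp, hmin, htouch⟩
  refine hu (fun x t => -φ x t) hφ.neg ε hε (fun x hx t ht => ?_) ⟨p, hp, ?_, by linarith⟩
  · simp only [reflectOperator, hessAt_neg, gradAt_neg, neg_neg, deriv.fun_neg]
    linarith [hstrict x hx t ht]
  · simpa only [neg_sub'] using hmin.neg

theorem ParabolicViscSupersol.of_rothe_limit {ι : Type*} {l : Filter ι} [l.NeBot] {h : ι → ℝ}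
    {z : ι → ℕ → Eucl d → ℝ} {U : Eucl d × ℝ → ℝ} (hΩ : IsOpen Ω)
    (hF : ContinuousOperatorOn Ω (Ioc 0 T) F) (hh : Tendsto h l (𝓝[>] 0))
    (hz : ∀ᶠ i in l, IsRotheSupersol Ω F (h i) (z i))
    (hU : ContinuousOn U (Ω ×ˢ Ioc 0 T))
    (hlim : TendstoLocallyUniformlyOn
      (fun i (p : Eucl d × ℝ) => rotheInterp (z i) (h i) p.1 p.2) U l (Ω ×ˢ Ioc 0 T)) :
    ParabolicViscSupersol Ω T F U := by
  refine ParabolicViscSubsol.neg (.of_rothe_limit (z := fun i m x => -z i m x) hΩ hF.reflect hh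
    (hz.mono fun _ hi => hi.neg) hU.neg ?_)
  simp only [rotheInterp_neg]
  exact uniformContinuous_neg.comp_tendstoLocallyUniformlyOn hlim

end Rothe

theorem rothe_limit_is_viscosity_solution_general {d : ℕ} {Ω : Set (Eucl d)} {T : ℝ}
    {F : Matrix (Fin d) (Fin d) ℝ → Eucl d → ℝ → Eucl d → ℝ → ℝ} {ι : Type*} {l : Filter ι}
    [l.NeBot] {h : ι → ℝ} {z : ι → ℕ → Eucl d → ℝ} {U : Eucl d × ℝ → ℝ} (hΩ : IsOpen Ω)
    (hF : ContinuousOperatorOn Ω (Ioc 0 T) F) (hh : Tendsto h l (𝓝[>] 0))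
    (hsub : ∀ᶠ i in l, IsRotheSubsol Ω F (h i) (z i))
    (hsuper : ∀ᶠ i in l, IsRotheSupersol Ω F (h i) (z i))
    (hU : ContinuousOn U (Ω ×ˢ Ioc 0 T))
    (hlim : TendstoLocallyUniformlyOn
      (fun i (p : Eucl d × ℝ) => rotheInterp (z i) (h i) p.1 p.2) U l (Ω ×ˢ Ioc 0 T)) :
    ParabolicViscSubsol Ω T F U ∧ ParabolicViscSupersol Ω T F U :=
  ⟨.of_rothe_limit hΩ hF hh hsub hU hlim, .of_rothe_limit hΩ hF hh hsuper hU hlim⟩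

/-- **Rothe limits are viscosity solutions.**  Under the standing hypotheses, if the Rothe
interpolants `U_{h_k}` converge uniformly on `closure Ω × [0,T]` along a sequence
`h_k ↓ 0` to a continuous `U`, then `U` is a viscosity solution of
`u_t + F(D²u, Du, u, x, t) = 0` in `Ω × (0,T]` in the sense of the paper. -/
theorem rothe_limit_is_viscosity_solution (d : ℕ) (T lam Lam gam C₀ K : ℝ)
    (hT : 0 < T) (hlam : 0 < lam) (hlL : lam ≤ Lam) (hgam : 0 ≤ gam)
    (hC₀ : 0 ≤ C₀) (hK : 0 ≤ K)
    (Ω : Set (Eucl d)) (hΩopen : IsOpen Ω) (hΩbdd : Bornology.IsBounded Ω)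
    (hΩsm : HasSmoothBoundary Ω)
    (F : Matrix (Fin d) (Fin d) ℝ → Eucl d → ℝ → Eucl d → ℝ → ℝ)
    (ω : ℝ → ℝ → ℝ) (σ₁ σ₂ : ℝ → ℝ)
    (hFcont : ContinuousOn
      (fun q : Matrix (Fin d) (Fin d) ℝ × Eucl d × ℝ × Eucl d × ℝ =>
        F q.1 q.2.1 q.2.2.1 q.2.2.2.1 q.2.2.2.2)
      (univ ×ˢ univ ×ˢ univ ×ˢ closure Ω ×ˢ Ici 0))
    (hUE : UniformlyElliptic lam Lam (closure Ω) (Ici 0) F)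
    (hStruct : StructureCondition lam Lam gam ω (closure Ω) (Ici 0) F)
    (hσ₁ : IsModulus σ₁) (hσ₂ : IsModulus σ₂)
    (hjoint : ∀ (M : Matrix (Fin d) (Fin d) ℝ) (P : Eucl d) (r : ℝ),
      ∀ x ∈ closure Ω, ∀ y ∈ closure Ω, ∀ t ∈ Ici (0:ℝ), ∀ s ∈ Ici (0:ℝ),
        |F M P r x t - F M P r y s| ≤ σ₁ ‖x - y‖ + σ₂ |t - s|)
    (hσ₂lin : ∀ h ∈ Ioc (0:ℝ) 1, σ₂ h ≤ C₀ * h)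
    (hFK : ∀ x ∈ closure Ω, ∀ t ∈ Ici (0:ℝ), |F 0 0 0 x t| ≤ K)
    (Z : ℝ → ℕ → Eucl d → ℝ)
    (hZ : ∀ h ∈ Ioc (0:ℝ) 1, (∀ x, Z h 0 x = 0) ∧
      ∀ m : ℕ, RotheStep Ω F h m (Z h m) (Z h (m + 1)))
    (hk : ℕ → ℝ) (hhk : ∀ k, hk k ∈ Ioc (0:ℝ) 1) (hanti : Antitone hk)
    (hk0 : Tendsto hk atTop (nhds 0))
    (U : Eucl d × ℝ → ℝ) (hUcont : ContinuousOn U (closure Ω ×ˢ Icc 0 T))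
    (hUlim : TendstoUniformlyOn
      (fun k (p : Eucl d × ℝ) => rotheInterp (Z (hk k)) (hk k) p.1 p.2)
      U atTop (closure Ω ×ˢ Icc 0 T)) :
    ParabolicViscSubsol Ω T F U ∧ ParabolicViscSupersol Ω T F U := by
  have hsub : Ω ×ˢ Ioc 0 T ⊆ closure Ω ×ˢ Icc 0 T :=
    prod_mono subset_closure Ioc_subset_Icc_self
  have hstep : ∀ k m, RotheStep Ω F (hk k) m (Z (hk k) m) (Z (hk k) (m + 1)) :=
    fun k => (hZ _ (hhk k)).2
  have hF : ContinuousOperatorOn Ω (Ioc 0 T) F := hFcont.mono fun q hq =>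
    ⟨hq.1, hq.2.1, hq.2.2.1, subset_closure hq.2.2.2.1, hq.2.2.2.2.1.le⟩
  exact rothe_limit_is_viscosity_solution_general hΩopen hF
    (tendsto_nhdsWithin_iff.2 ⟨hk0, .of_forall fun k => (hhk k).1⟩)
    (.of_forall fun k m => ⟨(hstep k m).1.mono subset_closure, (hstep k m).2.1.1⟩)
    (.of_forall fun k m => ⟨(hstep k m).1.mono subset_closure, (hstep k m).2.1.2⟩)
    (hUcont.mono hsub) (hUlim.mono hsub).tendstoLocallyUniformlyOn

end
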